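/- The groups G(+) = G₆ ⋊_{ja} ℤ and G(−) = G₆ ⋊_{jb} ℤ are not isomorphic. (This follows since the class [ja] in Out(G₆) is not conjugate to [jb] or [jb]⁻¹: indeed (ja)³ = 1 while (jb)³ = d∘e⁻¹∘f represents a nontrivial element of Out(G₆).) -/

import Mathlib

/-! `Aff(3) = ℝ³ ⋊ GL(3,ℝ)`, realized as the group of affine self-equivalences of `ℝ³`
(with multiplication given by composition, so that `(v,A)(w,B) = (v + Aw, AB)`). -/

abbrev V3 : Type := Fin 3 → ℝ
abbrev Aff3 : Type := V3 ≃ᵃ[ℝ] V3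

/-- The linear self-equivalence of `ℝ³` given by a diagonal matrix with entries `±1`. -/
noncomputable def diagLin (d : Fin 3 → ℝ) (hd : ∀ i, d i * d i = 1) : V3 ≃ₗ[ℝ] V3 where
  toFun v := fun i => d i * v i
  invFun v := fun i => d i * v i
  map_add' u v := by funext i; simp [mul_add]
  map_smul' c v := by funext i; simp [smul_eq_mul]; ring
  left_inv v := by funext i; simp [← mul_assoc, hd i]
  right_inv v := by funext i; simp [← mul_assoc, hd i]

lemma sq_one_X : ∀ i, (![(1:ℝ),-1,-1]) i * (![(1:ℝ),-1,-1]) i = 1 := by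
  intro i; fin_cases i <;> norm_num

lemma sq_one_Y : ∀ i, (![(-1:ℝ),1,-1]) i * (![(-1:ℝ),1,-1]) i = 1 := by
  intro i; fin_cases i <;> norm_num

/-- The affine transformation `x = (½e₁, X)`, acting by `w ↦ Xw + ½e₁`,
where `X = diag[1,−1,−1]`. -/
noncomputable def affx : Aff3 :=
  ((diagLin ![1,-1,-1] sq_one_X).toAffineEquiv).trans
    (AffineEquiv.constVAdd ℝ V3 ![1/2, 0, 0])

/-- The affine transformation `y = (½(e₂−e₃), Y)`, acting by `w ↦ Yw + ½(e₂−e₃)`,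
where `Y = diag[−1,1,−1]`. -/
noncomputable def affy : Aff3 :=
  ((diagLin ![-1,1,-1] sq_one_Y).toAffineEquiv).trans
    (AffineEquiv.constVAdd ℝ V3 ![0, 1/2, -1/2])

/-- `z = xy = (½(e₁−e₂+e₃), Z)`. -/
noncomputable def affz : Aff3 := affx * affy

/-- The Hantzsche–Wendt group `G₆`, the subgroup of `Aff(3)` generated by `x` and `y`. -/
noncomputable def G6 : Subgroup Aff3 := Subgroup.closure {affx, affy}

/-- The translation subgroup `T = G₆ ∩ (ℝ³ × {I})`: the elements of `G₆`
whose linear part is the identity. -/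
noncomputable def TT : Subgroup Aff3 :=
  G6 ⊓ (AffineEquiv.linearHom : Aff3 →* (V3 ≃ₗ[ℝ] V3)).ker

lemma affx_mem : affx ∈ G6 := Subgroup.subset_closure (by simp)
lemma affy_mem : affy ∈ G6 := Subgroup.subset_closure (by simp)

/-- `x` as an element of `G₆`. -/
noncomputable def xg : G6 := ⟨affx, affx_mem⟩
/-- `y` as an element of `G₆`. -/
noncomputable def yg : G6 := ⟨affy, affy_mem⟩
/-- `z = xy` as an element of `G₆`. -/
noncomputable def zg : G6 := xg * yg

lemma hw_hom_ext {M : Type*} [Group M] (f g : G6 →* M) (hx : f xg = g xg) (hy : f yg = g yg)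
    (u : G6) : f u = g u := by
  obtain ⟨u, hu⟩ := u
  have hu' : u ∈ Subgroup.closure {affx, affy} := hu
  induction hu' using Subgroup.closure_induction with
  | mem w hw =>
    rcases hw with rfl | hw
    · exact hx
    · obtain rfl : w = affy := hw
      exact hy
  | one => exact (map_one f).trans (map_one g).symm
  | mul p q hp hq ihp ihq =>
    have e : (⟨p * q, hu⟩ : G6) = ⟨p, hp⟩ * ⟨q, hq⟩ := rfl
    rw [e, map_mul, map_mul, ihp hp, ihq hq]
  | inv p hp ihp =>
    have e : (⟨p⁻¹, hu⟩ : G6) = (⟨p, hp⟩ : G6)⁻¹ := rfl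
    rw [e, map_inv, map_inv, ihp hp]

lemma affx_ap (w : V3) : affx w 0 = w 0 + 1/2 ∧ affx w 1 = - w 1 ∧ affx w 2 = - w 2 := by
  refine ⟨?_, ?_, ?_⟩ <;> simp [affx, diagLin] <;> ring

lemma affy_ap (w : V3) : affy w 0 = - w 0 ∧ affy w 1 = w 1 + 1/2 ∧ affy w 2 = - w 2 - 1/2 := by
  refine ⟨?_, ?_, ?_⟩ <;> simp [affy, diagLin] <;> ring

def HWInv (h : Aff3) : Prop :=
  ∃ (e1 e2 n : ℤ) (r : ℝ), ((e1 = 1 ∧ n % 2 = 0) ∨ (e1 = -1 ∧ n % 2 = 1)) ∧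
    (e2 = 1 ∨ e2 = -1) ∧ ∀ w : V3, h w 0 = e1 * w 0 + r ∧ h w 1 = e2 * w 1 + n / 2

lemma hw_inv (h : Aff3) (hh : h ∈ G6) : HWInv h := by
  have hu' : h ∈ Subgroup.closure {affx, affy} := hh
  clear hh
  induction hu' using Subgroup.closure_induction with
  | mem w hw =>
    rcases hw with rfl | hw
    · refine ⟨1, -1, 0, 1/2, by simp, by simp, fun w => ?_⟩
      have := affx_ap w
      constructor
      · rw [this.1]; simp
      · rw [this.2.1]; simp
    · obtain rfl : w = affy := hw
      refine ⟨-1, 1, 1, 0, by simp, by simp, fun w => ?_⟩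
      have := affy_ap w
      constructor
      · rw [this.1]; simp
      · rw [this.2.1]; simp
  | one => exact ⟨1, 1, 0, 0, by simp, by simp, fun w => by simp⟩
  | mul p q hp hq ihp ihq =>
    obtain ⟨a1, a2, n, r, h1, h2, h3⟩ := ihp
    obtain ⟨b1, b2, m, s, k1, k2, k3⟩ := ihq
    refine ⟨a1 * b1, a2 * b2, a2 * m + n, a1 * s + r, ?_, ?_, fun w => ?_⟩
    · rcases h1 with ⟨rfl, h1⟩ | ⟨rfl, h1⟩ <;> rcases k1 with ⟨rfl, k1⟩ | ⟨rfl, k1⟩ <;>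
        rcases h2 with rfl | rfl <;> omega
    · rcases h2 with rfl | rfl <;> rcases k2 with rfl | rfl <;> simp
    · have e : (p * q) w = p (q w) := rfl
      rw [e, (h3 _).1, (h3 _).2, (k3 _).1, (k3 _).2]
      push_cast
      constructor <;> ring
  | inv p hp ihp =>
    obtain ⟨a1, a2, n, r, h1, h2, h3⟩ := ihp
    refine ⟨a1, a2, -a2 * n, -a1 * r, ?_, h2, fun w => ?_⟩
    · rcases h1 with ⟨rfl, h1⟩ | ⟨rfl, h1⟩ <;>
        rcases h2 with rfl | rfl <;> omega
    · have e : p (p⁻¹ w) = w := p.apply_symm_apply w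
      have h4 := h3 (p⁻¹ w)
      rw [e] at h4
      have q1 : (a1 : ℝ) * a1 = 1 := by rcases h1 with ⟨rfl, h1⟩ | ⟨rfl, h1⟩ <;> simp
      have q2 : (a2 : ℝ) * a2 = 1 := by rcases h2 with rfl | rfl <;> simp
      rw [h4.1, h4.2]
      push_cast
      constructor
      · linear_combination (-(p⁻¹ w 0)) * q1
      · linear_combination (-(p⁻¹ w 1)) * q2

lemma hw_key (h : G6) (H : h * (zg * xg⁻¹ * zg⁻¹) = xg * h) : False := by
  have H1 : h * zg * xg⁻¹ = xg * h * zg := by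
    rw [← H]; group
  have H2 : h * zg = xg * h * zg * xg := by
    rw [← H1]; group
  obtain ⟨a1, a2, n, r, h1, h2, h3⟩ := hw_inv h.1 h.2
  have H3 : ∀ w : V3, h.1 (affx (affy w)) = affx (h.1 (affx (affy (affx w)))) := fun w =>
    congrArg (fun g : G6 => g.1 w) H2
  have c0 := congrFun (H3 0) 0
  have c1 := congrFun (H3 0) 1
  simp only [(h3 _).1, (h3 _).2, (affx_ap _).1, (affx_ap _).2.1, (affy_ap _).1, (affy_ap _).2.1,
    Pi.zero_apply] at c0 c1
  rcases h1 with ⟨rfl, h1⟩ | ⟨rfl, h1⟩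
  · have : n = a2 := by
      have : (n : ℝ) = a2 := by linarith
      exact_mod_cast this
    omega
  · push_cast at c0
    linarith

/-- The groups `G(+) = G₆ ⋊_{ja} ℤ` and `G(−) = G₆ ⋊_{jb} ℤ` are not
isomorphic.  Here `G₆ ⋊_φ ℤ` is the semidirect product in which the generator of `ℤ`
acts on `G₆` by the automorphism `φ`. -/
theorem statement11 :
    ∀ a b j : MulAut G6,
      a xg = xg⁻¹ → a yg = yg →
      b xg = xg → b yg = yg⁻¹ →
      j xg = zg → j yg = xg →
      IsEmpty
        ((G6 ⋊[zpowersHom (MulAut G6) (j * a)] Multiplicative ℤ) ≃*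
         (G6 ⋊[zpowersHom (MulAut G6) (j * b)] Multiplicative ℤ)) := by
  intro a b j ax ay bx hby jx jy
  refine ⟨fun f => ?_⟩
  have pax : (j * a) xg = zg⁻¹ := by simp [ax, jx]
  have pay : (j * a) yg = xg := by simp [ay, jy]
  have paz : (j * a) zg⁻¹ = yg := by
    rw [map_inv, zg, map_mul, pax, pay, zg]; group
  have pbx : (j * b) xg = zg := by simp [bx, jx]
  have pby : (j * b) yg = xg⁻¹ := by simp [hby, jy]
  have pb3 : ((j * b) ^ 3) xg = zg * xg⁻¹ * zg⁻¹ := by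
    have : ((j * b) ^ 3) xg = (j * b) ((j * b) ((j * b) xg)) := rfl
    rw [this, pbx, zg, map_mul, pbx, pby, map_mul, map_inv, pbx, zg, map_mul, pbx, pby, zg]
  generalize j * a = A at *
  generalize j * b = B at *
  have pa3 : A ^ 3 = 1 := by
    ext1 u
    refine hw_hom_ext (A ^ 3).toMonoidHom (MonoidHom.id _) ?_ ?_ u
    · change A (A (A xg)) = xg
      rw [pax, paz, pay]
    · change A (A (A yg)) = yg
      rw [pay, pax, paz]
  -- the projection to ℤ kills G6
  let π := (SemidirectProduct.rightHom (φ := zpowersHom (MulAut G6) B)).comp f.toMonoidHom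
  let t : G6 ⋊[zpowersHom (MulAut G6) A] Multiplicative ℤ :=
    SemidirectProduct.inr (Multiplicative.ofAdd 1)
  have tconj : ∀ u : G6, π (SemidirectProduct.inl (A u)) = π (SemidirectProduct.inl u) := by
    intro u
    have e : (SemidirectProduct.inl (A u) : G6 ⋊[zpowersHom (MulAut G6) A] Multiplicative ℤ)
        = t * SemidirectProduct.inl u * t⁻¹ := by
      have := SemidirectProduct.inl_aut (φ := zpowersHom (MulAut G6) A) (Multiplicative.ofAdd 1) u
      simpa [t] using this
    rw [e, map_mul, map_mul, map_inv, mul_comm, inv_mul_cancel_left]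
  have e1 := tconj xg
  have e2 := tconj yg
  rw [pax, zg, map_inv, map_inv, map_mul, map_mul] at e1
  rw [pay] at e2
  rw [e2] at e1
  have ey : π (SemidirectProduct.inl yg) = 1 := by
    generalize π (SemidirectProduct.inl yg) = c at e1
    have h1 : -(c.toAdd + c.toAdd) = c.toAdd := congrArg Multiplicative.toAdd e1
    have h2 : c.toAdd = 0 := by omega
    exact h2
  have kill : ∀ u : G6, π (SemidirectProduct.inl u) = 1 := fun u =>
    hw_hom_ext (π.comp SemidirectProduct.inl) 1 (e2.trans ey) ey u
  obtain ⟨p, hp⟩ := f.surjective (SemidirectProduct.inr (Multiplicative.ofAdd 1))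
  have hp' : π p = Multiplicative.ofAdd 1 := by
    change SemidirectProduct.rightHom (f p) = _
    rw [hp, SemidirectProduct.rightHom_inr]
  have hq : π (SemidirectProduct.inr p.right) = Multiplicative.ofAdd 1 := by
    rw [← SemidirectProduct.inl_left_mul_inr_right p, map_mul, kill, one_mul] at hp'
    exact hp'
  set q : G6 ⋊[zpowersHom (MulAut G6) A] Multiplicative ℤ := SemidirectProduct.inr p.right with hqdef
  have cen : ∀ u, q ^ 3 * u = u * q ^ 3 := by
    intro u
    have e3 : q ^ 3 = SemidirectProduct.inr (p.right ^ 3) := by rw [hqdef, map_pow]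
    have e4 : zpowersHom (MulAut G6) A (p.right ^ 3) = 1 := by
      rw [map_pow, zpowersHom_apply, ← zpow_natCast, ← zpow_mul, mul_comm, zpow_mul,
        zpow_natCast, pa3, one_zpow]
    rw [e3]
    ext1
    · simp only [SemidirectProduct.mul_left, SemidirectProduct.left_inr,
        SemidirectProduct.right_inr, e4, map_one, mul_one, one_mul, MulAut.one_apply]
    · simp only [SemidirectProduct.mul_right, SemidirectProduct.right_inr, mul_comm]
  have cs : ∀ v, (f q) ^ 3 * v = v * (f q) ^ 3 := by
    intro v
    obtain ⟨u, rfl⟩ := f.surjective v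
    rw [← map_pow, ← map_mul, ← map_mul, cen]
  have hr : ((f q) ^ 3).right = Multiplicative.ofAdd 3 := by
    have : ((f q) ^ 3).right = π q ^ 3 := (map_pow SemidirectProduct.rightHom (f q) 3)
    rw [this, hq]; rfl
  have key := congrArg SemidirectProduct.left (cs (SemidirectProduct.inl xg))
  simp only [SemidirectProduct.mul_left, hr, SemidirectProduct.left_inl,
    SemidirectProduct.right_inl, map_one, MulAut.one_apply] at key
  have e5 : zpowersHom (MulAut G6) B (Multiplicative.ofAdd 3) = B ^ 3 := by
    rw [zpowersHom_apply]; rfl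
  rw [e5, pb3] at key
  exact hw_key _ key
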